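/- Let T ∈ (0, ∞], let a, b, c, d : [0,T) → ℝ be continuous, and let ρ : [0,T) × ℝ² → ℝ be continuously differentiable with support contained in [0,T) × K for some compact set K ⊂ ℝ². Suppose ρ satisfies the continuity equation ∂ₜρ + ∂_{x₁}(ρ u₁) + ∂_{x₂}(ρ u₂) = 0, where u₁(t,x) = a(t)x₁ + b(t)x₂ and u₂(t,x) = c(t)x₁ + d(t)x₂. Define G_{x₁}(t) = (1/2)∫_{ℝ²} ρ x₁² dx, G_{x₂}(t) = (1/2)∫_{ℝ²} ρ x₂² dx, G_{x₁x₂}(t) = (1/2)∫_{ℝ²} ρ x₁x₂ dx. Then for all t ∈ [0,T): G_{x₁}' = 2a G_{x₁} + 2b G_{x₁x₂}, G_{x₂}' = 2d G_{x₂} + 2c G_{x₁x₂}, and G_{x₁x₂}' = (a+d) G_{x₁x₂} + b G_{x₂} + c G_{x₁}. -/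

import Mathlib

open MeasureTheory

/-!
Differentiating `∫ ρ w` under the integral sign, which the compact support of `ρ` allows,
replaces `ρ` by `∂ₜρ = -div (ρ u)`, and integrating by parts gives `∫ ρ Dw(u)`. If `u = Q x` is
linear and `w = φ ψ` is a product of two linear functionals, then
`Dw(u) = (φ ∘ Q) ψ + φ (ψ ∘ Q)` is again a sum of such products, so the second moments satisfy a
closed linear system, in any dimension. The equations in the plane are those for the two coordinate
functionals `x₁`, `x₂`, where `x₁ ∘ Q = a x₁ + b x₂` and `x₂ ∘ Q = c x₁ + d x₂`.
-/

open Set Filter Topology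

section ParametricIntegral

variable {α G : Type*} [MeasurableSpace α] {μ : Measure α} [NormedAddCommGroup G]
  [NormedSpace ℝ G] {J : Set ℝ} {t : ℝ}

theorem hasDerivWithinAt_integral_of_dominated_of_deriv_le (hJ : Convex ℝ J) (ht : t ∈ J)
    {f f' : ℝ → α → G} {bound : α → ℝ} (hf : ∀ s ∈ J, Integrable (f s) μ)
    (hf' : ∀ᵐ x ∂μ, ∀ s ∈ J, HasDerivWithinAt (f · x) (f' s x) J s)
    (hle : ∀ᵐ x ∂μ, ∀ s ∈ J, ‖f' s x‖ ≤ bound x) (hbound : Integrable bound μ) :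
    HasDerivWithinAt (fun s => ∫ x, f s x ∂μ) (∫ x, f' t x ∂μ) J t := by
  rw [hasDerivWithinAt_iff_tendsto_slope]
  have slope_integral : ∀ s ∈ J, ∫ x, slope (f · x) t s ∂μ = slope (∫ x, f · x ∂μ) t s := by
    intro s hs
    simp only [slope_def_module]
    rw [integral_smul, integral_sub (hf s hs) (hf t ht)]
  have slope_le : ∀ s ∈ J \ {t}, ∀ᵐ x ∂μ, ‖slope (f · x) t s‖ ≤ bound x := by
    rintro s ⟨hs, hst⟩
    filter_upwards [hf', hle] with x hx hxle
    have hpos : 0 < ‖s - t‖ := norm_pos_iff.2 (sub_ne_zero.2 hst)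
    rw [slope_def_module, norm_smul, norm_inv, inv_mul_le_iff₀ hpos, mul_comm]
    exact hJ.norm_image_sub_le_of_norm_hasDerivWithin_le hx hxle ht hs
  refine Tendsto.congr' (eventually_mem_nhdsWithin.mono fun s hs => slope_integral s hs.1) ?_
  refine tendsto_integral_filter_of_dominated_convergence bound ?_
    (eventually_mem_nhdsWithin.mono slope_le) hbound ?_
  · filter_upwards [self_mem_nhdsWithin] with s hs
    simp only [slope_def_module]
    exact (((hf s hs.1).sub (hf t ht)).smul _).aestronglyMeasurable
  · filter_upwards [hf'] with x hx
    exact hasDerivWithinAt_iff_tendsto_slope.1 (hx t ht)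

end ParametricIntegral

section CompactSupport

variable {X G : Type*} [TopologicalSpace X] [NormedAddCommGroup G] {K : Set X}

theorem exists_ball_forall_norm_le_of_continuousOn_prod {T : Type*} [PseudoMetricSpace T]
    {J : Set T} {t : T} {f : T → X → G}
    (hf : ContinuousOn (fun p : T × X => f p.1 p.2) (J ×ˢ univ)) (hK : IsCompact K) (ht : t ∈ J) :
    ∃ ε > 0, ∃ C, ∀ s ∈ J ∩ Metric.ball t ε, ∀ x ∈ K, ‖f s x‖ ≤ C := by
  obtain ⟨U, hKU, hU, hbdd⟩ :=
    Metric.exists_isOpen_isBounded_image_inter_of_isCompact_of_continuousOn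
      (isCompact_singleton.prod hK) (prod_mono (singleton_subset_iff.2 ht) (subset_univ K)) hf
  obtain ⟨I, V, hI, -, htI, hKV, hIV⟩ := generalized_tube_lemma isCompact_singleton hK hU hKU
  obtain ⟨ε, hε, hball⟩ := Metric.isOpen_iff.1 hI t (htI rfl)
  obtain ⟨C, hC⟩ := hbdd.exists_norm_le
  exact ⟨ε, hε, C, fun s hs x hx =>
    hC _ ⟨(s, x), ⟨hIV ⟨hball hs.2, hKV hx⟩, hs.1, mem_univ x⟩, rfl⟩⟩

theorem hasDerivWithinAt_integral_of_continuousOn_derivWithin [NormedSpace ℝ G] [T2Space X]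
    [MeasurableSpace X] [BorelSpace X] {μ : Measure X} [IsFiniteMeasureOnCompacts μ]
    {J : Set ℝ} {t : ℝ} (hJ : Convex ℝ J) (ht : t ∈ J) {f : ℝ → X → G}
    (hf : ∀ s ∈ J, Continuous (f s))
    (hdiff : ∀ x, DifferentiableOn ℝ (f · x) J)
    (hderiv : ContinuousOn (fun p : ℝ × X => derivWithin (f · p.2) J p.1) (J ×ˢ univ))
    (hK : IsCompact K) (hfK : ∀ s ∈ J, ∀ x ∉ K, f s x = 0) :
    HasDerivWithinAt (fun s => ∫ x, f s x ∂μ) (∫ x, derivWithin (f · x) J t ∂μ) J t := by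
  obtain ⟨ε, hε, C, hC⟩ := exists_ball_forall_norm_le_of_continuousOn_prod
    (f := fun s x => derivWithin (f · x) J s) hderiv hK ht
  have derivWithin_eq_zero : ∀ s ∈ J, ∀ x ∉ K, derivWithin (f · x) J s = 0 := by
    intro s hs x hx
    rw [derivWithin_congr (fun r hr => hfK r hr x hx) (hfK s hs x hx), derivWithin_fun_const,
      Pi.zero_apply]
  have hball : Metric.ball t ε ∈ 𝓝 t := Metric.ball_mem_nhds t hε
  rw [← hasDerivWithinAt_inter hball]
  refine hasDerivWithinAt_integral_of_dominated_of_deriv_le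
    (f' := fun s x => derivWithin (f · x) J s) (bound := K.indicator fun _ => C)
    (hJ.inter (convex_ball t ε)) ⟨ht, mem_of_mem_nhds hball⟩ ?_ ?_ ?_ ?_
  · exact fun s hs =>
      (hf s hs.1).integrable_of_hasCompactSupport (HasCompactSupport.intro hK (hfK s hs.1))
  · exact ae_of_all _ fun x s hs => ((hdiff x s hs.1).hasDerivWithinAt).mono inter_subset_left
  · refine ae_of_all _ fun x s hs => ?_
    by_cases hx : x ∈ K
    · simpa only [indicator_of_mem hx] using hC s hs x hx
    · rw [indicator_of_notMem hx, derivWithin_eq_zero s hs.1 x hx, norm_zero]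
  · rw [integrable_indicator_iff hK.measurableSet]
    exact integrableOn_const hK.measure_lt_top.ne

end CompactSupport

section ProductDomain

variable {E G : Type*} [NormedAddCommGroup E] [NormedSpace ℝ E] [NormedAddCommGroup G]
  [NormedSpace ℝ G] {J : Set ℝ} {f : ℝ → E → G}

theorem contDiff_of_contDiffOn_prod_univ {n : WithTop ℕ∞}
    (hf : ContDiffOn ℝ n (fun p : ℝ × E => f p.1 p.2) (J ×ˢ univ)) {t : ℝ} (ht : t ∈ J) :
    ContDiff ℝ n (f t) :=
  contDiffOn_univ.1 <| hf.comp (f := fun x : E => (t, x)) (by fun_prop) fun x _ => ⟨ht, mem_univ x⟩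

theorem hasDerivWithinAt_of_differentiableOn_prod_univ
    (hf : DifferentiableOn ℝ (fun p : ℝ × E => f p.1 p.2) (J ×ˢ univ)) {t : ℝ} (ht : t ∈ J)
    (x : E) :
    HasDerivWithinAt (f · x)
      (fderivWithin ℝ (fun p : ℝ × E => f p.1 p.2) (J ×ˢ univ) (t, x) (1, 0)) J t :=
  (hf (t, x) ⟨ht, mem_univ x⟩).hasFDerivWithinAt.comp_hasDerivWithinAt (f := fun s : ℝ => (s, x)) t
    ((hasDerivWithinAt_id t J).prodMk (hasDerivWithinAt_const t J x)) fun _ hs => ⟨hs, mem_univ x⟩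

theorem continuousOn_derivWithin_of_contDiffOn_prod_univ (hJ : UniqueDiffOn ℝ J)
    (hf : ContDiffOn ℝ 1 (fun p : ℝ × E => f p.1 p.2) (J ×ˢ univ)) :
    ContinuousOn (fun p : ℝ × E => derivWithin (f · p.2) J p.1) (J ×ˢ univ) := by
  have hfderiv := hf.continuousOn_fderivWithin (hJ.prod uniqueDiffOn_univ) le_rfl
  refine (hfderiv.clm_apply (continuousOn_const (c := ((1 : ℝ), (0 : E))))).congr fun p hp => ?_
  exact (hasDerivWithinAt_of_differentiableOn_prod_univ (hf.differentiableOn one_ne_zero)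
    hp.1 p.2).derivWithin (hJ p.1 hp.1)

theorem hasDerivWithinAt_integral_of_contDiffOn_prod_univ [MeasurableSpace E] [BorelSpace E]
    {μ : Measure E} [IsFiniteMeasureOnCompacts μ] (hJ : Convex ℝ J) (hJ' : (interior J).Nonempty)
    (hf : ContDiffOn ℝ 1 (fun p : ℝ × E => f p.1 p.2) (J ×ˢ univ)) {K : Set E} (hK : IsCompact K)
    (hfK : ∀ s ∈ J, ∀ x ∉ K, f s x = 0) {t : ℝ} (ht : t ∈ J) :
    HasDerivWithinAt (fun s => ∫ x, f s x ∂μ) (∫ x, derivWithin (f · x) J t ∂μ) J t :=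
  hasDerivWithinAt_integral_of_continuousOn_derivWithin hJ ht
    (fun _ hs => (contDiff_of_contDiffOn_prod_univ hf hs).continuous)
    (fun x _ hs => (hasDerivWithinAt_of_differentiableOn_prod_univ
      (hf.differentiableOn one_ne_zero) hs x).differentiableWithinAt)
    (continuousOn_derivWithin_of_contDiffOn_prod_univ (uniqueDiffOn_convex hJ hJ') hf) hK hfK

end ProductDomain

section Divergence

variable {E : Type*} [NormedAddCommGroup E] [NormedSpace ℝ E]

/-- The divergence of the vector field `V` at `x`, as the trace of its derivative, so that no
coordinates on `E` have to be chosen. -/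
noncomputable def divergence (V : E → E) (x : E) : ℝ :=
  LinearMap.trace ℝ E (fderiv ℝ V x)

variable {V : E → E}

theorem divergence_eq_sum_fderiv_coord {ι : Type*} [Fintype ι] (b : Module.Basis ι ℝ E) {x : E}
    (hV : DifferentiableAt ℝ V x) :
    divergence V x = ∑ i, fderiv ℝ (fun y => b.coord i (V y)) x (b i) := by
  classical
  have := b.finiteDimensional_of_finite
  have hcoord : ∀ i, fderiv ℝ (fun y => b.coord i (V y)) x =
      (b.coord i).toContinuousLinearMap.comp (fderiv ℝ V x) := fun i =>
    ((b.coord i).toContinuousLinearMap.hasFDerivAt.comp x hV.hasFDerivAt).fderiv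
  simp only [divergence, LinearMap.trace_eq_matrix_trace ℝ b, Matrix.trace, Matrix.diag,
    LinearMap.toMatrix_apply, hcoord]
  rfl

theorem divergence_prod_eq_deriv_add_deriv {V : ℝ × ℝ → ℝ × ℝ} {z : ℝ × ℝ}
    (hV : DifferentiableAt ℝ V z) :
    divergence V z =
      deriv (fun s => (V (s, z.2)).1) z.1 + deriv (fun s => (V (z.1, s)).2) z.2 := by
  have hfst : HasDerivAt (fun s => (V (s, z.2)).1) (fderiv ℝ (fun y => (V y).1) z (1, 0)) z.1 :=
    hV.fst.hasFDerivAt.comp_hasDerivAt (f := fun s : ℝ => (s, z.2)) z.1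
      ((hasDerivAt_id z.1).prodMk (hasDerivAt_const z.1 z.2))
  have hsnd : HasDerivAt (fun s => (V (z.1, s)).2) (fderiv ℝ (fun y => (V y).2) z (0, 1)) z.2 :=
    hV.snd.hasFDerivAt.comp_hasDerivAt (f := fun s : ℝ => (z.1, s)) z.2
      ((hasDerivAt_const z.2 z.1).prodMk (hasDerivAt_id z.2))
  rw [hfst.deriv, hsnd.deriv, divergence_eq_sum_fderiv_coord (Module.Basis.finTwoProd ℝ) hV]
  simp [Fin.sum_univ_two]

variable [FiniteDimensional ℝ E] [MeasurableSpace E] [BorelSpace E] {μ : Measure E}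
  [μ.IsAddHaarMeasure]

theorem integral_divergence_mul_eq_neg_integral_fderiv {w : E → ℝ} (hV : ContDiff ℝ 1 V)
    (hVc : HasCompactSupport V) (hw : ContDiff ℝ 1 w) :
    ∫ x, divergence V x * w x ∂μ = -∫ x, fderiv ℝ w x (V x) ∂μ := by
  let b := Module.finBasis ℝ E
  let v := fun i x => b.coord i (V x)
  have hv : ∀ i, ContDiff ℝ 1 (v i) := fun i =>
    (b.coord i).toContinuousLinearMap.contDiff.comp hV
  have hvc : ∀ i, HasCompactSupport (v i) := fun i => hVc.comp_left (map_zero (b.coord i))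
  have integrable_fderiv_mul : ∀ i, Integrable (fun x => fderiv ℝ (v i) x (b i) * w x) μ := fun i =>
    ((((hv i).continuous_fderiv one_ne_zero).clm_apply continuous_const).mul
      hw.continuous).integrable_of_hasCompactSupport ((hvc i).fderiv_apply (𝕜 := ℝ) (b i)).mul_right
  have integrable_mul_fderiv : ∀ i, Integrable (fun x => v i x * fderiv ℝ w x (b i)) μ := fun i =>
    ((hv i).continuous.mul ((hw.continuous_fderiv one_ne_zero).clm_apply
      continuous_const)).integrable_of_hasCompactSupport (hvc i).mul_right
  have integrable_mul : ∀ i, Integrable (fun x => v i x * w x) μ := fun i =>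
    ((hv i).continuous.mul hw.continuous).integrable_of_hasCompactSupport (hvc i).mul_right
  have by_parts : ∀ i, ∫ x, fderiv ℝ (v i) x (b i) * w x ∂μ =
      -∫ x, v i x * fderiv ℝ w x (b i) ∂μ := fun i => by
    rw [integral_mul_fderiv_eq_neg_fderiv_mul_of_integrable (integrable_fderiv_mul i)
      (integrable_mul_fderiv i) (integrable_mul i) (fun x _ => (hv i).differentiable one_ne_zero x)
      (fun x _ => hw.differentiable one_ne_zero x), neg_neg]
  have hdir : ∀ x, fderiv ℝ w x (V x) = ∑ i, v i x * fderiv ℝ w x (b i) := fun x => by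
    conv_lhs => rw [← b.sum_repr (V x)]
    simp only [map_sum, map_smul, smul_eq_mul, v, Module.Basis.coord_apply]
  simp only [divergence_eq_sum_fderiv_coord b (hV.differentiable one_ne_zero _), Finset.sum_mul,
    hdir]
  rw [integral_finsetSum _ fun i _ => integrable_fderiv_mul i,
    integral_finsetSum _ fun i _ => integrable_mul_fderiv i, ← Finset.sum_neg_distrib]
  exact Finset.sum_congr rfl fun i _ => by_parts i

end Divergence

section ContinuityEquation

variable {E : Type*} [NormedAddCommGroup E] [NormedSpace ℝ E]

/-- The continuity equation `∂ₜρ + div (ρ u) = 0` on `J × E` for a density `ρ` transported by the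
velocity field `u`; the time derivative is one-sided at an endpoint of `J`. -/
def SatisfiesContinuityEquation (J : Set ℝ) (ρ : ℝ → E → ℝ) (u : ℝ → E → E) : Prop :=
  ∀ t ∈ J, ∀ x, derivWithin (ρ · x) J t + divergence (fun y => ρ t y • u t y) x = 0

variable [FiniteDimensional ℝ E] [MeasurableSpace E] [BorelSpace E] {μ : Measure E}
  [μ.IsAddHaarMeasure] {J : Set ℝ} {K : Set E} {ρ : ℝ → E → ℝ} {t : ℝ}

theorem hasDerivWithinAt_integral_mul_of_satisfiesContinuityEquation (hJ : Convex ℝ J)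
    (hJ' : (interior J).Nonempty) (hρ : ContDiffOn ℝ 1 (fun p : ℝ × E => ρ p.1 p.2) (J ×ˢ univ))
    (hK : IsCompact K) (hρK : ∀ s ∈ J, ∀ x ∉ K, ρ s x = 0) {u : ℝ → E → E}
    (hcont : SatisfiesContinuityEquation J ρ u) (ht : t ∈ J) (hu : ContDiff ℝ 1 (u t))
    {w : E → ℝ} (hw : ContDiff ℝ 1 w) :
    HasDerivWithinAt (fun s => ∫ x, ρ s x * w x ∂μ) (∫ x, ρ t x * fderiv ℝ w x (u t x) ∂μ) J t := by
  have hρw : ContDiffOn ℝ 1 (fun p : ℝ × E => ρ p.1 p.2 * w p.2) (J ×ˢ univ) :=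
    hρ.mul (hw.comp contDiff_snd).contDiffOn
  have hρt : ContDiff ℝ 1 (ρ t) := contDiff_of_contDiffOn_prod_univ hρ ht
  have hdensity : ∀ x, derivWithin (fun s => ρ s x * w x) J t =
      -(divergence (fun y => ρ t y • u t y) x * w x) := fun x => by
    have hdiff : DifferentiableWithinAt ℝ (ρ · x) J t :=
      (hasDerivWithinAt_of_differentiableOn_prod_univ (hρ.differentiableOn one_ne_zero)
        ht x).differentiableWithinAt
    rw [derivWithin_mul_const hdiff]
    linear_combination w x * hcont t ht x
  have hflux : ContDiff ℝ 1 fun y => ρ t y • u t y := hρt.smul hu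
  have hfluxc : HasCompactSupport fun y => ρ t y • u t y :=
    (HasCompactSupport.intro hK (hρK t ht)).smul_right
  refine (hasDerivWithinAt_integral_of_contDiffOn_prod_univ (f := fun s x => ρ s x * w x) hJ hJ'
    hρw hK (fun s hs x hx => by simp only [hρK s hs x hx, zero_mul]) ht).congr_deriv ?_
  simp only [hdensity]
  rw [integral_neg, integral_divergence_mul_eq_neg_integral_fderiv hflux hfluxc hw, neg_neg]
  simp only [map_smul, smul_eq_mul]

end ContinuityEquation

section SecondMoment

variable {E : Type*} [NormedAddCommGroup E] [NormedSpace ℝ E] [MeasurableSpace E]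

/-- The second moment `½ ∫ f φ ψ` of the density `f` along the linear functionals `φ` and `ψ`. For
coordinate functionals on the plane these are the quantities `G_{x₁}`, `G_{x₂}`, `G_{x₁x₂}`. -/
noncomputable def secondMoment (μ : Measure E) (f : E → ℝ) (φ ψ : E →L[ℝ] ℝ) : ℝ :=
  (1 / 2) * ∫ x, f x * (φ x * ψ x) ∂μ

theorem secondMoment_comm (μ : Measure E) (f : E → ℝ) (φ ψ : E →L[ℝ] ℝ) :
    secondMoment μ f φ ψ = secondMoment μ f ψ φ := by
  simp only [secondMoment, mul_comm (φ _)]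

variable [BorelSpace E] {μ : Measure E}

theorem integrable_mul_mul [IsFiniteMeasureOnCompacts μ] {f : E → ℝ} (hf : Continuous f)
    (hfc : HasCompactSupport f) (φ ψ : E →L[ℝ] ℝ) :
    Integrable (fun x => f x * (φ x * ψ x)) μ :=
  (hf.mul (φ.continuous.mul ψ.continuous)).integrable_of_hasCompactSupport hfc.mul_right

theorem secondMoment_smul_add_smul_left [IsFiniteMeasureOnCompacts μ] {f : E → ℝ}
    (hf : Continuous f) (hfc : HasCompactSupport f) (a b : ℝ) (φ χ ψ : E →L[ℝ] ℝ) :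
    secondMoment μ f (a • φ + b • χ) ψ =
      a * secondMoment μ f φ ψ + b * secondMoment μ f χ ψ := by
  have hexpand : ∀ x, f x * ((a • φ + b • χ) x * ψ x) =
      a * (f x * (φ x * ψ x)) + b * (f x * (χ x * ψ x)) := fun x => by
    simp only [add_apply, smul_apply, smul_eq_mul]
    ring
  simp only [secondMoment, hexpand]
  rw [integral_add ((integrable_mul_mul hf hfc φ ψ).const_mul a)
    ((integrable_mul_mul hf hfc χ ψ).const_mul b), integral_const_mul, integral_const_mul]
  ring

variable [FiniteDimensional ℝ E] [μ.IsAddHaarMeasure] {J : Set ℝ} {K : Set E} {ρ : ℝ → E → ℝ}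
  {t : ℝ}

theorem hasDerivWithinAt_secondMoment (hJ : Convex ℝ J) (hJ' : (interior J).Nonempty)
    (hρ : ContDiffOn ℝ 1 (fun p : ℝ × E => ρ p.1 p.2) (J ×ˢ univ)) (hK : IsCompact K)
    (hρK : ∀ s ∈ J, ∀ x ∉ K, ρ s x = 0) {Q : ℝ → E →L[ℝ] E}
    (hcont : SatisfiesContinuityEquation J ρ fun s => Q s) (ht : t ∈ J) (φ ψ : E →L[ℝ] ℝ) :
    HasDerivWithinAt (fun s => secondMoment μ (ρ s) φ ψ)
      (secondMoment μ (ρ t) (φ.comp (Q t)) ψ + secondMoment μ (ρ t) φ (ψ.comp (Q t))) J t := by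
  have hρt : Continuous (ρ t) := (contDiff_of_contDiffOn_prod_univ hρ ht).continuous
  have hρtc : HasCompactSupport (ρ t) := HasCompactSupport.intro hK (hρK t ht)
  have hw : ContDiff ℝ 1 fun x => φ x * ψ x := by fun_prop
  have hfderiv : ∀ x, fderiv ℝ (fun x => φ x * ψ x) x (Q t x) =
      φ.comp (Q t) x * ψ x + φ x * ψ.comp (Q t) x := fun x => by
    rw [fderiv_fun_mul φ.differentiableAt ψ.differentiableAt]
    simp only [ContinuousLinearMap.fderiv, add_apply, smul_apply,
      ContinuousLinearMap.comp_apply, smul_eq_mul]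
    ring
  have hmoment := (hasDerivWithinAt_integral_mul_of_satisfiesContinuityEquation (μ := μ) hJ hJ' hρ
    hK hρK hcont ht (Q t).contDiff hw).const_mul (1 / 2)
  refine hmoment.congr_deriv ?_
  simp only [hfderiv, mul_add, secondMoment]
  rw [integral_add (integrable_mul_mul hρt hρtc _ _) (integrable_mul_mul hρt hρtc _ _), mul_add]

theorem hasDerivWithinAt_secondMoment_self (hJ : Convex ℝ J) (hJ' : (interior J).Nonempty)
    (hρ : ContDiffOn ℝ 1 (fun p : ℝ × E => ρ p.1 p.2) (J ×ˢ univ)) (hK : IsCompact K)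
    (hρK : ∀ s ∈ J, ∀ x ∉ K, ρ s x = 0) {Q : ℝ → E →L[ℝ] E}
    (hcont : SatisfiesContinuityEquation J ρ fun s => Q s) (ht : t ∈ J) {φ ψ : E →L[ℝ] ℝ} {a b : ℝ}
    (hφ : φ.comp (Q t) = a • φ + b • ψ) :
    HasDerivWithinAt (fun s => secondMoment μ (ρ s) φ φ)
      (2 * a * secondMoment μ (ρ t) φ φ + 2 * b * secondMoment μ (ρ t) φ ψ) J t := by
  refine (hasDerivWithinAt_secondMoment hJ hJ' hρ hK hρK hcont ht φ φ).congr_deriv ?_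
  have hρt : Continuous (ρ t) := (contDiff_of_contDiffOn_prod_univ hρ ht).continuous
  rw [secondMoment_comm _ _ φ (φ.comp (Q t)), hφ,
    secondMoment_smul_add_smul_left hρt (.intro hK (hρK t ht)), secondMoment_comm _ _ ψ φ]
  ring

theorem hasDerivWithinAt_secondMoment_mixed (hJ : Convex ℝ J) (hJ' : (interior J).Nonempty)
    (hρ : ContDiffOn ℝ 1 (fun p : ℝ × E => ρ p.1 p.2) (J ×ˢ univ)) (hK : IsCompact K)
    (hρK : ∀ s ∈ J, ∀ x ∉ K, ρ s x = 0) {Q : ℝ → E →L[ℝ] E}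
    (hcont : SatisfiesContinuityEquation J ρ fun s => Q s) (ht : t ∈ J) {φ ψ : E →L[ℝ] ℝ}
    {a b c d : ℝ} (hφ : φ.comp (Q t) = a • φ + b • ψ) (hψ : ψ.comp (Q t) = c • φ + d • ψ) :
    HasDerivWithinAt (fun s => secondMoment μ (ρ s) φ ψ)
      ((a + d) * secondMoment μ (ρ t) φ ψ + b * secondMoment μ (ρ t) ψ ψ +
        c * secondMoment μ (ρ t) φ φ) J t := by
  refine (hasDerivWithinAt_secondMoment hJ hJ' hρ hK hρK hcont ht φ ψ).congr_deriv ?_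
  have hρt : Continuous (ρ t) := (contDiff_of_contDiffOn_prod_univ hρ ht).continuous
  have hρtc : HasCompactSupport (ρ t) := .intro hK (hρK t ht)
  rw [secondMoment_comm _ _ φ (ψ.comp (Q t)), hφ, hψ, secondMoment_smul_add_smul_left hρt hρtc,
    secondMoment_smul_add_smul_left hρt hρtc, secondMoment_comm _ _ ψ φ]
  ring

end SecondMoment

section Plane

/-- The linear map of the plane with matrix `[[a, b], [c, d]]`. -/
noncomputable def planarLinearMap (a b c d : ℝ) : ℝ × ℝ →L[ℝ] ℝ × ℝ :=
  (a • ContinuousLinearMap.fst ℝ ℝ ℝ + b • ContinuousLinearMap.snd ℝ ℝ ℝ).prod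
    (c • ContinuousLinearMap.fst ℝ ℝ ℝ + d • ContinuousLinearMap.snd ℝ ℝ ℝ)

variable {J : Set ℝ} {a b c d : ℝ → ℝ}

theorem satisfiesContinuityEquation_planarLinearMap_iff {ρ : ℝ → ℝ × ℝ → ℝ}
    (hρ : ∀ t ∈ J, Differentiable ℝ (ρ t)) :
    SatisfiesContinuityEquation J ρ (fun t => planarLinearMap (a t) (b t) (c t) (d t)) ↔
      ∀ t ∈ J, ∀ x y : ℝ,
        derivWithin (fun s => ρ s (x, y)) J t +
          deriv (fun s => ρ t (s, y) * (a t * s + b t * y)) x +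
          deriv (fun s => ρ t (x, s) * (c t * x + d t * s)) y = 0 := by
  refine forall₂_congr fun t ht => Prod.forall.trans <| forall₂_congr fun x y => ?_
  have hflux : Differentiable ℝ fun z => ρ t z • planarLinearMap (a t) (b t) (c t) (d t) z :=
    (hρ t ht).smul (planarLinearMap _ _ _ _).differentiable
  rw [divergence_prod_eq_deriv_add_deriv (hflux (x, y)), add_assoc]
  simp [planarLinearMap]

end Plane

theorem stmt_1_general {J : Set ℝ} (hJ : Convex ℝ J) (hJ' : (interior J).Nonempty)
    {a b c d : ℝ → ℝ} {ρ : ℝ → ℝ → ℝ → ℝ}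
    (hreg : ContDiffOn ℝ 1 (fun p : ℝ × ℝ × ℝ => ρ p.1 p.2.1 p.2.2) (J ×ˢ univ))
    {K : Set (ℝ × ℝ)} (hK : IsCompact K) (hsupp : ∀ t ∈ J, ∀ x y : ℝ, (x, y) ∉ K → ρ t x y = 0)
    (hcontinuity : ∀ t ∈ J, ∀ x y : ℝ,
      derivWithin (fun s => ρ s x y) J t +
        deriv (fun s => ρ t s y * (a t * s + b t * y)) x +
        deriv (fun s => ρ t x s * (c t * x + d t * s)) y = 0) :
    ∀ t ∈ J,
      HasDerivWithinAt (fun τ => (1 / 2) * ∫ z : ℝ × ℝ, ρ τ z.1 z.2 * z.1 ^ 2)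
        (2 * a t * ((1 / 2) * ∫ z : ℝ × ℝ, ρ t z.1 z.2 * z.1 ^ 2) +
          2 * b t * ((1 / 2) * ∫ z : ℝ × ℝ, ρ t z.1 z.2 * (z.1 * z.2))) J t ∧
      HasDerivWithinAt (fun τ => (1 / 2) * ∫ z : ℝ × ℝ, ρ τ z.1 z.2 * z.2 ^ 2)
        (2 * d t * ((1 / 2) * ∫ z : ℝ × ℝ, ρ t z.1 z.2 * z.2 ^ 2) +
          2 * c t * ((1 / 2) * ∫ z : ℝ × ℝ, ρ t z.1 z.2 * (z.1 * z.2))) J t ∧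
      HasDerivWithinAt (fun τ => (1 / 2) * ∫ z : ℝ × ℝ, ρ τ z.1 z.2 * (z.1 * z.2))
        ((a t + d t) * ((1 / 2) * ∫ z : ℝ × ℝ, ρ t z.1 z.2 * (z.1 * z.2)) +
          b t * ((1 / 2) * ∫ z : ℝ × ℝ, ρ t z.1 z.2 * z.2 ^ 2) +
          c t * ((1 / 2) * ∫ z : ℝ × ℝ, ρ t z.1 z.2 * z.1 ^ 2)) J t := by
  intro t ht
  let f : ℝ → ℝ × ℝ → ℝ := fun s z => ρ s z.1 z.2
  have hfK : ∀ s ∈ J, ∀ z ∉ K, f s z = 0 := fun s hs z => hsupp s hs z.1 z.2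
  have hcont := (satisfiesContinuityEquation_planarLinearMap_iff (ρ := f) fun s hs =>
    (contDiff_of_contDiffOn_prod_univ hreg hs).differentiable one_ne_zero).2 hcontinuity
  let x₁ := ContinuousLinearMap.fst ℝ ℝ ℝ
  let x₂ := ContinuousLinearMap.snd ℝ ℝ ℝ
  let Q := planarLinearMap (a t) (b t) (c t) (d t)
  have hx₁ : x₁.comp Q = a t • x₁ + b t • x₂ := ContinuousLinearMap.fst_comp_prod _ _
  have hx₂ : x₂.comp Q = c t • x₁ + d t • x₂ := ContinuousLinearMap.snd_comp_prod _ _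
  have hG₁ := hasDerivWithinAt_secondMoment_self (μ := volume) hJ hJ' hreg hK hfK hcont ht hx₁
  have hG₂ := hasDerivWithinAt_secondMoment_self (μ := volume) hJ hJ' hreg hK hfK hcont ht
    (hx₂.trans (add_comm _ _))
  have hG₁₂ := hasDerivWithinAt_secondMoment_mixed (μ := volume) hJ hJ' hreg hK hfK hcont ht hx₁ hx₂
  rw [secondMoment_comm _ _ x₂ x₁] at hG₂
  simp only [pow_two]
  exact ⟨hG₁, hG₂, hG₁₂⟩

/-- Let `J = [0,T)` with `0 < T ≤ ∞`, let `a,b,c,d` be continuous on `J`,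
and let `ρ` be `C¹` on `J × ℝ²` with spatial support in a fixed compact set `K`,
satisfying the continuity equation `∂ₜρ + ∂₁(ρu₁) + ∂₂(ρu₂) = 0` for the linear
velocity field `u₁ = a x₁ + b x₂`, `u₂ = c x₁ + d x₂`. Then the second moments
`G_{x₁} = (1/2)∫ρx₁²`, `G_{x₂} = (1/2)∫ρx₂²`, `G_{x₁x₂} = (1/2)∫ρx₁x₂` satisfy
`G_{x₁}' = 2aG_{x₁} + 2bG_{x₁x₂}`, `G_{x₂}' = 2dG_{x₂} + 2cG_{x₁x₂}`,
`G_{x₁x₂}' = (a+d)G_{x₁x₂} + bG_{x₂} + cG_{x₁}` on `J`. -/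
theorem stmt_1 (J : Set ℝ)
    (hJ : (∃ T : ℝ, 0 < T ∧ J = Set.Ico 0 T) ∨ J = Set.Ici 0)
    (a b c d : ℝ → ℝ)
    (ha : ContinuousOn a J) (hb : ContinuousOn b J)
    (hc : ContinuousOn c J) (hd : ContinuousOn d J)
    (ρ : ℝ → ℝ → ℝ → ℝ)
    (hreg : ContDiffOn ℝ 1 (fun p : ℝ × ℝ × ℝ => ρ p.1 p.2.1 p.2.2)
      (J ×ˢ (Set.univ : Set (ℝ × ℝ))))
    (K : Set (ℝ × ℝ)) (hK : IsCompact K)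
    (hsupp : ∀ t : ℝ, ∀ x y : ℝ, (x, y) ∉ K → ρ t x y = 0)
    (hcontinuity : ∀ t ∈ J, ∀ x y : ℝ,
      derivWithin (fun s => ρ s x y) J t +
        deriv (fun s => ρ t s y * (a t * s + b t * y)) x +
        deriv (fun s => ρ t x s * (c t * x + d t * s)) y = 0) :
    ∀ t ∈ J,
      HasDerivWithinAt (fun τ => (1 / 2) * ∫ z : ℝ × ℝ, ρ τ z.1 z.2 * z.1 ^ 2)
        (2 * a t * ((1 / 2) * ∫ z : ℝ × ℝ, ρ t z.1 z.2 * z.1 ^ 2) +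
          2 * b t * ((1 / 2) * ∫ z : ℝ × ℝ, ρ t z.1 z.2 * (z.1 * z.2))) J t ∧
      HasDerivWithinAt (fun τ => (1 / 2) * ∫ z : ℝ × ℝ, ρ τ z.1 z.2 * z.2 ^ 2)
        (2 * d t * ((1 / 2) * ∫ z : ℝ × ℝ, ρ t z.1 z.2 * z.2 ^ 2) +
          2 * c t * ((1 / 2) * ∫ z : ℝ × ℝ, ρ t z.1 z.2 * (z.1 * z.2))) J t ∧
      HasDerivWithinAt (fun τ => (1 / 2) * ∫ z : ℝ × ℝ, ρ τ z.1 z.2 * (z.1 * z.2))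
        ((a t + d t) * ((1 / 2) * ∫ z : ℝ × ℝ, ρ t z.1 z.2 * (z.1 * z.2)) +
          b t * ((1 / 2) * ∫ z : ℝ × ℝ, ρ t z.1 z.2 * z.2 ^ 2) +
          c t * ((1 / 2) * ∫ z : ℝ × ℝ, ρ t z.1 z.2 * z.1 ^ 2)) J t := by
  have hinterval : Convex ℝ J ∧ (interior J).Nonempty := by
    rcases hJ with ⟨T, hT, rfl⟩ | rfl
    · exact ⟨convex_Ico 0 T, by simpa only [interior_Ico, nonempty_Ioo]⟩
    · exact ⟨convex_Ici 0, by simp only [interior_Ici, nonempty_Ioi]⟩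
  exact stmt_1_general hinterval.1 hinterval.2 hreg hK (fun t _ => hsupp t) hcontinuity
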